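/- arXiv:1207.2010 — 4 statements merged into one kernel-verified Lean document; each statement's English description precedes it below -/
import Mathlib

section
/- Continuity of the planner's solution functions (used as Proposition 2.1 of Dana (1993)): the functions x^i : [0,T] × (0,∞) → (0,∞), i = 1,…,I, and μ : [0,T] × (0,∞) → (0,∞), defined by letting (x^1(t,x),…,x^I(t,x)) be the unique maximizer of the pointwise social planner problem at (t,x) and μ(t,x) the associated Lagrange multiplier satisfying λ^i ∂u^i/∂c(t, x^i(t,x)) = μ(t,x) for all i and Σ_{i=1}^I x^i(t,x) = x, are continuous on [0,T] × (0,∞). -/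
open Set
open Filter Topology

theorem slope_bds (f f' _f'' : ℝ → ℝ) (h1 : ∀ c ∈ Ioi (0:ℝ), HasDerivAt f (f' c) c)
    (hanti : StrictAntiOn f' (Ioi 0)) {c d : ℝ} (hc : 0 < c) (hcd : c < d) :
    f' d < (f d - f c) / (d - c) ∧ (f d - f c) / (d - c) < f' c := by
  obtain ⟨ξ, hξ, he⟩ := exists_hasDerivAt_eq_slope f f' hcd
    (fun x hx => (h1 x (lt_of_lt_of_le hc hx.1)).continuousAt.continuousWithinAt)
    (fun x hx => h1 x (lt_trans hc hx.1))
  rw [← he]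
  have hξ0 : 0 < ξ := hc.trans hξ.1
  exact ⟨hanti hξ0 (hc.trans hcd) hξ.2, hanti hc hξ0 hξ.1⟩

theorem near_right {f : ℝ → ℝ} {c : ℝ} {P : ℝ → Prop} (hf : ContinuousAt f c)
    (hP : ∀ᶠ y in 𝓝 (f c), P y) : ∃ d, c < d ∧ P (f d) := by
  have h : ∀ᶠ d in 𝓝[>] c, P (f d) := (hf.eventually hP).filter_mono nhdsWithin_le_nhds
  obtain ⟨d, hd⟩ := (h.and self_mem_nhdsWithin).exists
  exact ⟨d, hd.2, hd.1⟩

theorem near_left {f : ℝ → ℝ} {c : ℝ} {P : ℝ → Prop} (hc : 0 < c) (hf : ContinuousAt f c)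
    (hP : ∀ᶠ y in 𝓝 (f c), P y) : ∃ d, 0 < d ∧ d < c ∧ P (f d) := by
  have h : ∀ᶠ d in 𝓝[<] c, P (f d) := (hf.eventually hP).filter_mono nhdsWithin_le_nhds
  have h0 : ∀ᶠ d in 𝓝[<] c, 0 < d := (eventually_gt_nhds hc).filter_mono nhdsWithin_le_nhds
  obtain ⟨d, hd⟩ := ((h.and h0).and self_mem_nhdsWithin).exists
  exact ⟨d, hd.1.2, hd.2, hd.1.1⟩

theorem deriv_cont_t (S : Set ℝ) (u u' : ℝ → ℝ → ℝ)
    (hu_cont : ContinuousOn (fun p : ℝ × ℝ => u p.1 p.2) (S ×ˢ Ici 0))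
    (hu' : ∀ t ∈ S, ∀ c ∈ Ioi (0:ℝ), HasDerivAt (u t) (u' t c) c)
    (hc' : ∀ t ∈ S, ∀ c ∈ Ioi (0:ℝ), ContinuousAt (u' t) c)
    (hanti : ∀ t ∈ S, StrictAntiOn (u' t) (Ioi 0)) (c : ℝ) (hc : 0 < c) :
    ContinuousOn (fun t => u' t c) S := by
  have hut : ∀ d, 0 < d → ContinuousOn (fun t => u t d) S := fun d hd =>
    hu_cont.comp (f := fun t => (t, d)) (by fun_prop) (fun t ht => ⟨ht, hd.le⟩)
  intro t0 ht0
  refine tendsto_order.2 ⟨fun b hb => ?_, fun b hb => ?_⟩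
  · obtain ⟨d, hcd, hd⟩ := near_right (hc' t0 ht0 c hc) (eventually_gt_nhds hb)
    have hs : ContinuousOn (fun t => (u t d - u t c) / (d - c)) S :=
      ((hut d (hc.trans hcd)).sub (hut c hc)).div_const _
    have h := (hs t0 ht0).eventually (eventually_gt_nhds
      (hd.trans (slope_bds _ _ (u' t0) (hu' t0 ht0) (hanti t0 ht0) hc hcd).1))
    filter_upwards [h, self_mem_nhdsWithin] with t h ht
    exact h.trans (slope_bds _ _ (u' t) (hu' t ht) (hanti t ht) hc hcd).2
  · obtain ⟨d, hd0, hcd, hd⟩ := near_left hc (hc' t0 ht0 c hc) (eventually_lt_nhds hb)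
    have hs : ContinuousOn (fun t => (u t c - u t d) / (c - d)) S :=
      ((hut c hc).sub (hut d hd0)).div_const _
    have h := (hs t0 ht0).eventually (eventually_lt_nhds
      ((slope_bds _ _ (u' t0) (hu' t0 ht0) (hanti t0 ht0) hd0 hcd).2.trans hd))
    filter_upwards [h, self_mem_nhdsWithin] with t h ht
    exact (slope_bds _ _ (u' t) (hu' t ht) (hanti t ht) hd0 hcd).1.trans h


/-- Continuity of the planner's solution functions (Proposition 2.1 of Dana (1993)):
the functions `x^i : [0,T] × (0,∞) → (0,∞)` and `μ : [0,T] × (0,∞) → (0,∞)`,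
defined by letting `(x^1(t,x),…,x^I(t,x))` be the unique maximizer of the pointwise
social planner problem at `(t,x)` and `μ(t,x)` the associated Lagrange multiplier
(so that `λ^i ∂u^i/∂c(t, x^i(t,x)) = μ(t,x)` for all `i` and `∑ x^i(t,x) = x`),
are continuous on `[0,T] × (0,∞)`. -/
theorem planner_solution_continuous
    (T : ℝ) (hT : 0 < T)
    (I : ℕ) (hI : 1 ≤ I)
    (lam : Fin I → ℝ) (hlam : ∀ i, 0 < lam i)
    (u u' u'' : Fin I → ℝ → ℝ → ℝ)
    (hu_cont : ∀ i, ContinuousOn (fun p : ℝ × ℝ => u i p.1 p.2) (Icc 0 T ×ˢ Ici 0))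
    (hu' : ∀ i, ∀ t ∈ Icc (0:ℝ) T, ∀ c ∈ Ioi (0:ℝ), HasDerivAt (u i t) (u' i t c) c)
    (hu'' : ∀ i, ∀ t ∈ Icc (0:ℝ) T, ∀ c ∈ Ioi (0:ℝ), HasDerivAt (u' i t) (u'' i t c) c)
    (hu''_cont : ∀ i, ∀ t ∈ Icc (0:ℝ) T, ContinuousOn (u'' i t) (Ioi 0))
    (hu'_pos : ∀ i, ∀ t ∈ Icc (0:ℝ) T, ∀ c ∈ Ioi (0:ℝ), 0 < u' i t c)
    (hu''_neg : ∀ i, ∀ t ∈ Icc (0:ℝ) T, ∀ c ∈ Ioi (0:ℝ), u'' i t c < 0)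
    (hInada0 : ∀ i, ∀ M : ℝ, ∃ δ > (0:ℝ), ∀ t ∈ Icc (0:ℝ) T, ∀ c ∈ Ioo (0:ℝ) δ,
      M ≤ u' i t c)
    (hInadaInf : ∀ i, ∀ ε > (0:ℝ), ∃ N : ℝ, ∀ t ∈ Icc (0:ℝ) T, ∀ c ∈ Ici N,
      u' i t c ≤ ε)
    -- the planner's solution functions
    (xsol : Fin I → ℝ → ℝ → ℝ) (musol : ℝ → ℝ → ℝ)
    -- `(xsol i t x)_i` is feasible and interior, with Lagrange multiplier `musol t x`
    (hx_pos : ∀ i, ∀ t ∈ Icc (0:ℝ) T, ∀ x ∈ Ioi (0:ℝ), 0 < xsol i t x)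
    (hx_sum : ∀ t ∈ Icc (0:ℝ) T, ∀ x ∈ Ioi (0:ℝ), (∑ i, xsol i t x) = x)
    (hmu_pos : ∀ t ∈ Icc (0:ℝ) T, ∀ x ∈ Ioi (0:ℝ), 0 < musol t x)
    (hFOC : ∀ i, ∀ t ∈ Icc (0:ℝ) T, ∀ x ∈ Ioi (0:ℝ),
      lam i * u' i t (xsol i t x) = musol t x)
    -- `(xsol i t x)_i` is the (unique) maximizer of the pointwise planner problem
    (hmax : ∀ t ∈ Icc (0:ℝ) T, ∀ x ∈ Ioi (0:ℝ),
      ∀ z : Fin I → ℝ, (∀ i, 0 ≤ z i) → (∑ i, z i) = x →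
        (∑ i, lam i * u i t (z i)) ≤ ∑ i, lam i * u i t (xsol i t x)) :
    (∀ i, ContinuousOn (fun p : ℝ × ℝ => xsol i p.1 p.2) (Icc 0 T ×ˢ Ioi 0)) ∧
    ContinuousOn (fun p : ℝ × ℝ => musol p.1 p.2) (Icc 0 T ×ˢ Ioi 0) := by
  have hanti : ∀ i, ∀ t ∈ Icc (0:ℝ) T, StrictAntiOn (u' i t) (Ioi 0) := by
    intro i t ht
    refine strictAntiOn_of_deriv_neg (convex_Ioi 0)
      (fun c hc => (hu'' i t ht c hc).continuousAt.continuousWithinAt) (fun c hc => ?_)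
    rw [interior_Ioi] at hc
    rw [(hu'' i t ht c hc).deriv]
    exact hu''_neg i t ht c hc
  have hg : ∀ i, ∀ t ∈ Icc (0:ℝ) T, ∀ c ∈ Ioi (0:ℝ),
      ContinuousAt (fun c => lam i * u' i t c) c := fun i t ht c hc =>
    continuousAt_const.mul (hu'' i t ht c hc).continuousAt
  have hanti' : ∀ i, ∀ t ∈ Icc (0:ℝ) T, StrictAntiOn (fun c => lam i * u' i t c) (Ioi 0) :=
    fun i t ht a ha b hb hab => mul_lt_mul_of_pos_left (hanti i t ht ha hb hab) (hlam i)
  have hgt : ∀ i, ∀ p ∈ Icc (0:ℝ) T ×ˢ Ioi (0:ℝ), ∀ c, 0 < c →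
      Tendsto (fun q : ℝ × ℝ => lam i * u' i q.1 c) (𝓝[Icc 0 T ×ˢ Ioi 0] p)
        (𝓝 (lam i * u' i p.1 c)) := by
    intro i p hp c hc
    have h := deriv_cont_t (Icc 0 T) (u i) (u' i) (hu_cont i) (hu' i)
      (fun t ht c hc => (hu'' i t ht c hc).continuousAt) (hanti i) c hc
    have h2 : ContinuousOn (fun q : ℝ × ℝ => u' i q.1 c) (Icc 0 T ×ˢ Ioi 0) :=
      h.comp (f := Prod.fst) continuousOn_fst (fun q hq => hq.1)
    exact (h2 p hp).const_mul (lam i)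
  haveI : Nonempty (Fin I) := ⟨⟨0, hI⟩⟩
  have hsnd : ∀ p : ℝ × ℝ, Tendsto (fun q : ℝ × ℝ => q.2) (𝓝[Icc 0 T ×ˢ Ioi 0] p) (𝓝 p.2) :=
    fun p => continuous_snd.continuousAt.mono_left nhdsWithin_le_nhds
  have hmu : ContinuousOn (fun p : ℝ × ℝ => musol p.1 p.2) (Icc 0 T ×ˢ Ioi 0) := by
    intro p hp
    refine tendsto_order.2 ⟨fun b hb => ?_, fun b hb => ?_⟩
    · have hex : ∀ i, ∃ d, xsol i p.1 p.2 < d ∧ b < lam i * u' i p.1 d := fun i =>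
        near_right (hg i p.1 hp.1 _ (hx_pos i p.1 hp.1 p.2 hp.2))
          (eventually_gt_nhds (by simpa [hFOC i p.1 hp.1 p.2 hp.2] using hb))
      choose d hd1 hd2 using hex
      have hd0 : ∀ i, 0 < d i := fun i => (hx_pos i p.1 hp.1 p.2 hp.2).trans (hd1 i)
      have hsum : p.2 < ∑ i, d i := by
        rw [← hx_sum p.1 hp.1 p.2 hp.2]
        exact Finset.sum_lt_sum_of_nonempty Finset.univ_nonempty (fun i _ => hd1 i)
      have h1 := eventually_all.2 fun i =>
        (hgt i p hp (d i) (hd0 i)).eventually (eventually_gt_nhds (hd2 i))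
      filter_upwards [h1, (hsnd p).eventually (eventually_lt_nhds hsum), self_mem_nhdsWithin]
        with q h1 h2 hq
      by_contra! hcon
      have hle : ∑ i, d i ≤ ∑ i, xsol i q.1 q.2 := Finset.sum_le_sum fun i _ => by
        refine ((hanti' i q.1 hq.1).le_iff_ge (hx_pos i q.1 hq.1 q.2 hq.2) (hd0 i)).1 ?_
        have := hFOC i q.1 hq.1 q.2 hq.2
        have := h1 i
        linarith
      rw [hx_sum q.1 hq.1 q.2 hq.2] at hle
      linarith
    · have hex : ∀ i, ∃ d, 0 < d ∧ d < xsol i p.1 p.2 ∧ lam i * u' i p.1 d < b := fun i =>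
        near_left (hx_pos i p.1 hp.1 p.2 hp.2) (hg i p.1 hp.1 _ (hx_pos i p.1 hp.1 p.2 hp.2))
          (eventually_lt_nhds (by simpa [hFOC i p.1 hp.1 p.2 hp.2] using hb))
      choose d hd0 hd1 hd2 using hex
      have hsum : ∑ i, d i < p.2 := by
        rw [← hx_sum p.1 hp.1 p.2 hp.2]
        exact Finset.sum_lt_sum_of_nonempty Finset.univ_nonempty (fun i _ => hd1 i)
      have h1 := eventually_all.2 fun i =>
        (hgt i p hp (d i) (hd0 i)).eventually (eventually_lt_nhds (hd2 i))
      filter_upwards [h1, (hsnd p).eventually (eventually_gt_nhds hsum), self_mem_nhdsWithin]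
        with q h1 h2 hq
      by_contra! hcon
      have hle : ∑ i, xsol i q.1 q.2 ≤ ∑ i, d i := Finset.sum_le_sum fun i _ => by
        refine ((hanti' i q.1 hq.1).le_iff_ge (hd0 i) (hx_pos i q.1 hq.1 q.2 hq.2)).1 ?_
        have := hFOC i q.1 hq.1 q.2 hq.2
        have := h1 i
        linarith
      rw [hx_sum q.1 hq.1 q.2 hq.2] at hle
      linarith
  refine ⟨fun i p hp => ?_, hmu⟩
  have hxp := hx_pos i p.1 hp.1 p.2 hp.2
  refine tendsto_order.2 ⟨fun b hb => ?_, fun b hb => ?_⟩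
  · obtain ⟨d, hd0, hdx, hbd⟩ : ∃ d, 0 < d ∧ d < xsol i p.1 p.2 ∧ b < d := 
      near_left (f := id) hxp continuousAt_id (eventually_gt_nhds hb)
    have hlt : musol p.1 p.2 < lam i * u' i p.1 d := by
      rw [← hFOC i p.1 hp.1 p.2 hp.2]
      exact hanti' i p.1 hp.1 hd0 hxp hdx
    filter_upwards [(hmu p hp).eventually_lt (hgt i p hp d hd0) hlt, self_mem_nhdsWithin]
      with q h hq
    rw [← hFOC i q.1 hq.1 q.2 hq.2] at h
    exact hbd.trans (((hanti' i q.1 hq.1).lt_iff_gt (hx_pos i q.1 hq.1 q.2 hq.2) hd0).1 h)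
  · have hb0 : 0 < b := hxp.trans hb
    have hlt : lam i * u' i p.1 b < musol p.1 p.2 := by
      rw [← hFOC i p.1 hp.1 p.2 hp.2]
      exact hanti' i p.1 hp.1 hxp hb0 hb
    filter_upwards [(hgt i p hp b hb0).eventually_lt (hmu p hp) hlt, self_mem_nhdsWithin]
      with q h hq
    rw [← hFOC i q.1 hq.1 q.2 hq.2] at h
    exact ((hanti' i q.1 hq.1).lt_iff_gt hb0 (hx_pos i q.1 hq.1 q.2 hq.2)).1 h
end

section
/- Real-analyticity of the planner's solution functions: if in addition each u^i is real-analytic on (0,T) × (0,∞) (as a function of the two real variables (t,c) jointly), then the functions x^i : [0,T] × (0,∞) → (0,∞), i = 1,…,I, and μ : [0,T] × (0,∞) → (0,∞), defined by the first-order conditions λ^i ∂u^i/∂c(t, x^i(t,x)) = μ(t,x) for all i and Σ_{i=1}^I x^i(t,x) = x, are real-analytic on the open set (0,T) × (0,∞). -/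
open Set

/-- Scalar analytic implicit function theorem with a parameter. -/
theorem analytic_solve (F : ℝ × ℝ → ℝ) (t0 c0 d : ℝ) (hF : AnalyticAt ℝ F (t0, c0))
    (hd : HasDerivAt (fun c => F (t0, c)) d c0) (hd0 : d ≠ 0) :
    ∃ g : ℝ × ℝ → ℝ, AnalyticAt ℝ g (t0, F (t0, c0)) ∧ g (t0, F (t0, c0)) = c0 ∧
      (∀ᶠ p in nhds (t0, F (t0, c0)), F (p.1, g p) = p.2) ∧
      HasDerivAt (fun m => g (t0, m)) d⁻¹ (F (t0, c0)) := by
  set L := fderiv ℝ F (t0, c0) with hL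
  have hFL : HasFDerivAt F L (t0, c0) := hF.differentiableAt.hasFDerivAt
  have hLd : L (0, 1) = d := by
    have h1 : HasDerivAt (fun c : ℝ => (t0, c)) ((0 : ℝ), (1 : ℝ)) c0 :=
      (hasDerivAt_const c0 t0).prodMk (hasDerivAt_id c0)
    have h2 := HasFDerivAt.comp_hasDerivAt (f := fun c : ℝ => (t0, c)) c0 hFL h1
    exact h2.unique hd
  have hLab : ∀ a b : ℝ, L (a, b) = a * L (1, 0) + b * d := by
    intro a b
    have : ((a, b) : ℝ × ℝ) = a • ((1 : ℝ), (0 : ℝ)) + b • ((0 : ℝ), (1 : ℝ)) := by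
      simp
    rw [this, map_add, map_smul, map_smul, hLd]
    simp
  let f' : (ℝ × ℝ) ≃L[ℝ] (ℝ × ℝ) := ContinuousLinearEquiv.equivOfInverse
    ((ContinuousLinearMap.fst ℝ ℝ ℝ).prod L)
    ((ContinuousLinearMap.fst ℝ ℝ ℝ).prod
      (d⁻¹ • (ContinuousLinearMap.snd ℝ ℝ ℝ - L (1, 0) • ContinuousLinearMap.fst ℝ ℝ ℝ)))
    (by
      rintro ⟨a, b⟩
      ext
      · simp
      · simp [hLab a b]
        field_simp
        ring)
    (by
      rintro ⟨a, b⟩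
      ext
      · simp
      · change L (a, d⁻¹ * (b - L (1, 0) * a)) = b
        rw [hLab]
        field_simp
        ring)
  let H : ℝ × ℝ → ℝ × ℝ := fun p => (p.1, F p)
  have hHa : AnalyticAt ℝ H (t0, c0) := analyticAt_fst.prod hF
  have hHc : ContDiffAt ℝ ⊤ H (t0, c0) := hHa.contDiffAt
  have hH' : HasFDerivAt H (f' : (ℝ × ℝ) →L[ℝ] (ℝ × ℝ)) (t0, c0) :=
    hasFDerivAt_fst.prodMk hFL
  have hn : (⊤ : WithTop ℕ∞) ≠ 0 := by simp
  have hs : HasStrictFDerivAt H (f' : (ℝ × ℝ) →L[ℝ] (ℝ × ℝ)) (t0, c0) :=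
    hHc.hasStrictFDerivAt' hH' hn
  let G := hHc.localInverse hH' hn
  have hG : ContDiffAt ℝ ⊤ G (H (t0, c0)) := hHc.to_localInverse hH' hn
  have hGa : AnalyticAt ℝ G (t0, F (t0, c0)) := hG.analyticAt
  have hG0 : G (t0, F (t0, c0)) = (t0, c0) := hs.localInverse_apply_image
  have hev : ∀ᶠ p in nhds (t0, F (t0, c0)), H (G p) = p := hs.eventually_right_inverse
  have hev2 : ∀ᶠ p in nhds (t0, F (t0, c0)), F (p.1, (G p).2) = p.2 := by
    filter_upwards [hev] with p hp
    have h1 : (G p).1 = p.1 := (Prod.ext_iff.1 hp).1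
    have h2 : F (G p) = p.2 := (Prod.ext_iff.1 hp).2
    rw [← h1]
    exact h2
  have hga : AnalyticAt ℝ (fun p => (G p).2) (t0, F (t0, c0)) := analyticAt_snd.comp hGa
  refine ⟨fun p => (G p).2, hga, by simp [hG0], hev2, ?_⟩
  have hcont : ContinuousAt (fun m : ℝ => (t0, m)) (F (t0, c0)) := by fun_prop
  refine HasDerivAt.of_local_left_inverse (f := fun c => F (t0, c)) ?_ ?_ hd0 ?_
  · exact ContinuousAt.comp (f := fun m : ℝ => (t0, m)) (g := fun p => (G p).2)
      hga.continuousAt hcont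
  · simpa [hG0] using hd
  · exact hcont.eventually hev2

/-- Real-analyticity of the planner's solution functions: if in addition each `u^i`
is real-analytic on `(0,T) × (0,∞)` (jointly in `(t,c)`), then the solution
functions `x^i` and `μ` of the pointwise social planner problem
(characterized by `λ^i ∂u^i/∂c(t, x^i(t,x)) = μ(t,x)` and `∑ x^i(t,x) = x`)
are real-analytic on the open set `(0,T) × (0,∞)`. -/
theorem planner_solution_analytic
    (T : ℝ) (hT : 0 < T)
    (I : ℕ) (hI : 1 ≤ I)
    (lam : Fin I → ℝ) (hlam : ∀ i, 0 < lam i)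
    (u u' u'' : Fin I → ℝ → ℝ → ℝ)
    (hu_cont : ∀ i, ContinuousOn (fun p : ℝ × ℝ => u i p.1 p.2) (Icc 0 T ×ˢ Ici 0))
    -- real-analyticity of the utility functions on `(0,T) × (0,∞)`
    (hu_anal : ∀ i, AnalyticOnNhd ℝ (fun p : ℝ × ℝ => u i p.1 p.2) (Ioo 0 T ×ˢ Ioi 0))
    (hu' : ∀ i, ∀ t ∈ Icc (0:ℝ) T, ∀ c ∈ Ioi (0:ℝ), HasDerivAt (u i t) (u' i t c) c)
    (hu'' : ∀ i, ∀ t ∈ Icc (0:ℝ) T, ∀ c ∈ Ioi (0:ℝ), HasDerivAt (u' i t) (u'' i t c) c)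
    (hu''_cont : ∀ i, ∀ t ∈ Icc (0:ℝ) T, ContinuousOn (u'' i t) (Ioi 0))
    (hu'_pos : ∀ i, ∀ t ∈ Icc (0:ℝ) T, ∀ c ∈ Ioi (0:ℝ), 0 < u' i t c)
    (hu''_neg : ∀ i, ∀ t ∈ Icc (0:ℝ) T, ∀ c ∈ Ioi (0:ℝ), u'' i t c < 0)
    (hInada0 : ∀ i, ∀ M : ℝ, ∃ δ > (0:ℝ), ∀ t ∈ Icc (0:ℝ) T, ∀ c ∈ Ioo (0:ℝ) δ,
      M ≤ u' i t c)
    (hInadaInf : ∀ i, ∀ ε > (0:ℝ), ∃ N : ℝ, ∀ t ∈ Icc (0:ℝ) T, ∀ c ∈ Ici N,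
      u' i t c ≤ ε)
    -- the planner's solution functions, characterized by the first-order conditions
    (xsol : Fin I → ℝ → ℝ → ℝ) (musol : ℝ → ℝ → ℝ)
    (hx_pos : ∀ i, ∀ t ∈ Icc (0:ℝ) T, ∀ x ∈ Ioi (0:ℝ), 0 < xsol i t x)
    (hx_sum : ∀ t ∈ Icc (0:ℝ) T, ∀ x ∈ Ioi (0:ℝ), (∑ i, xsol i t x) = x)
    (hmu_pos : ∀ t ∈ Icc (0:ℝ) T, ∀ x ∈ Ioi (0:ℝ), 0 < musol t x)
    (hFOC : ∀ i, ∀ t ∈ Icc (0:ℝ) T, ∀ x ∈ Ioi (0:ℝ),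
      lam i * u' i t (xsol i t x) = musol t x)
    (hmax : ∀ t ∈ Icc (0:ℝ) T, ∀ x ∈ Ioi (0:ℝ),
      ∀ z : Fin I → ℝ, (∀ i, 0 ≤ z i) → (∑ i, z i) = x →
        (∑ i, lam i * u i t (z i)) ≤ ∑ i, lam i * u i t (xsol i t x)) :
    (∀ i, AnalyticOnNhd ℝ (fun p : ℝ × ℝ => xsol i p.1 p.2) (Ioo 0 T ×ˢ Ioi 0)) ∧
    AnalyticOnNhd ℝ (fun p : ℝ × ℝ => musol p.1 p.2) (Ioo 0 T ×ˢ Ioi 0) := by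
  have hu'_an : ∀ i, ∀ t ∈ Ioo (0:ℝ) T, ∀ c ∈ Ioi (0:ℝ),
      AnalyticAt ℝ (fun p : ℝ × ℝ => u' i p.1 p.2) (t, c) := by
    intro i t ht c hc
    have hmem : (t, c) ∈ Ioo (0:ℝ) T ×ˢ Ioi (0:ℝ) := ⟨ht, hc⟩
    have h1 := (hu_anal i (t, c) hmem).fderiv
    have h2 : AnalyticAt ℝ (fun p : ℝ × ℝ =>
        fderiv ℝ (fun p : ℝ × ℝ => u i p.1 p.2) p ((0 : ℝ), (1 : ℝ))) (t, c) :=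
      ((ContinuousLinearMap.apply ℝ ℝ ((0 : ℝ), (1 : ℝ))).analyticAt _).comp h1
    refine h2.congr ?_
    filter_upwards [(isOpen_Ioo.prod isOpen_Ioi).mem_nhds hmem] with p hp
    have h3 : HasDerivAt (fun c : ℝ => (p.1, c)) ((0 : ℝ), (1 : ℝ)) p.2 :=
      (hasDerivAt_const p.2 p.1).prodMk (hasDerivAt_id p.2)
    have h4 := HasFDerivAt.comp_hasDerivAt (f := fun c : ℝ => (p.1, c)) p.2
      (hu_anal i p hp).differentiableAt.hasFDerivAt h3
    exact h4.unique (hu' i p.1 (Ioo_subset_Icc_self hp.1) p.2 hp.2)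
  have hanti : ∀ i, ∀ t ∈ Icc (0:ℝ) T, StrictAntiOn (u' i t) (Ioi 0) := by
    intro i t ht
    refine strictAntiOn_of_deriv_neg (convex_Ioi 0)
      (fun c hc => (hu'' i t ht c hc).continuousAt.continuousWithinAt) ?_
    intro c hc
    rw [interior_Ioi] at hc
    rw [(hu'' i t ht c hc).deriv]
    exact hu''_neg i t ht c hc
  have : Nonempty (Fin I) := ⟨⟨0, hI⟩⟩
  -- uniqueness of the solution of the first-order conditions
  have huniq : ∀ t ∈ Icc (0:ℝ) T, ∀ x ∈ Ioi (0:ℝ), ∀ (z : Fin I → ℝ) (m : ℝ),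
      (∀ i, 0 < z i) → (∑ i, z i) = x → (∀ i, lam i * u' i t (z i) = m) →
      m = musol t x ∧ ∀ i, z i = xsol i t x := by
    intro t ht x hx z m hz hzs hzm
    have hlt : ∀ i, m < musol t x ↔ xsol i t x < z i := by
      intro i
      rw [← hzm i, ← hFOC i t ht x hx, mul_lt_mul_iff_right₀ (hlam i)]
      exact (hanti i t ht).lt_iff_gt (hz i) (hx_pos i t ht x hx)
    have hgt : ∀ i, musol t x < m ↔ z i < xsol i t x := by
      intro i
      rw [← hzm i, ← hFOC i t ht x hx, mul_lt_mul_iff_right₀ (hlam i)]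
      exact (hanti i t ht).lt_iff_gt (hx_pos i t ht x hx) (hz i)
    have hm : m = musol t x := by
      rcases lt_trichotomy m (musol t x) with h | h | h
      · exfalso
        have := Finset.sum_lt_sum_of_nonempty (s := Finset.univ) Finset.univ_nonempty
          (fun i _ => (hlt i).1 h)
        rw [hzs, hx_sum t ht x hx] at this
        exact lt_irrefl _ this
      · exact h
      · exfalso
        have := Finset.sum_lt_sum_of_nonempty (s := Finset.univ) Finset.univ_nonempty
          (fun i _ => (hgt i).1 h)
        rw [hzs, hx_sum t ht x hx] at this
        exact lt_irrefl _ this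
    refine ⟨hm, fun i => le_antisymm ?_ ?_⟩
    · exact not_lt.1 fun h => absurd ((hlt i).2 h) (by simp [hm])
    · exact not_lt.1 fun h => absurd ((hgt i).2 h) (by simp [hm])
  -- local statement
  have key : ∀ p ∈ Ioo (0:ℝ) T ×ˢ Ioi (0:ℝ),
      (∀ i, AnalyticAt ℝ (fun p : ℝ × ℝ => xsol i p.1 p.2) p) ∧
      AnalyticAt ℝ (fun p : ℝ × ℝ => musol p.1 p.2) p := by
    rintro ⟨t0, x0⟩ hp
    have ht0 : t0 ∈ Ioo (0:ℝ) T := hp.1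
    have hx0 : x0 ∈ Ioi (0:ℝ) := hp.2
    have ht0' : t0 ∈ Icc (0:ℝ) T := Ioo_subset_Icc_self ht0
    set m0 := musol t0 x0 with hm0
    have step1 : ∀ i, ∃ g : ℝ × ℝ → ℝ, AnalyticAt ℝ g (t0, m0) ∧ g (t0, m0) = xsol i t0 x0 ∧
        (∀ᶠ p in nhds (t0, m0), lam i * u' i p.1 (g p) = p.2) ∧
        HasDerivAt (fun m => g (t0, m)) (lam i * u'' i t0 (xsol i t0 x0))⁻¹ m0 := by
      intro i
      have hpos := hx_pos i t0 ht0' x0 hx0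
      have h := analytic_solve (fun p => lam i * u' i p.1 p.2) t0 (xsol i t0 x0)
        (lam i * u'' i t0 (xsol i t0 x0))
        (analyticAt_const.mul (hu'_an i t0 ht0 _ hpos))
        ((hu'' i t0 ht0' _ hpos).const_mul (lam i))
        (mul_neg_of_pos_of_neg (hlam i) (hu''_neg i t0 ht0' _ hpos)).ne
      simpa only [hFOC i t0 ht0' x0 hx0, ← hm0] using h
    choose g hga hg0 hge hgd using step1
    have hS0 : (∑ i, g i (t0, m0)) = x0 := by
      simp only [hg0]
      exact hx_sum t0 ht0' x0 hx0
    have hSd : (∑ i, (lam i * u'' i t0 (xsol i t0 x0))⁻¹) < 0 :=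
      Finset.sum_neg (fun i _ => inv_lt_zero.2 (mul_neg_of_pos_of_neg (hlam i)
        (hu''_neg i t0 ht0' _ (hx_pos i t0 ht0' x0 hx0)))) Finset.univ_nonempty
    obtain ⟨k, hka, hk0, hke, -⟩ := analytic_solve (fun p => ∑ i, g i p) t0 m0 _
      (Finset.univ.analyticAt_fun_sum fun i _ => hga i)
      (HasDerivAt.fun_sum fun i _ => hgd i) hSd.ne
    simp only [hS0] at hka hk0 hke
    have hφa : AnalyticAt ℝ (fun p : ℝ × ℝ => (p.1, k p)) (t0, x0) := analyticAt_fst.prod hka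
    have hφ0 : (fun p : ℝ × ℝ => (p.1, k p)) (t0, x0) = (t0, m0) := by simp [hk0]
    have hya : ∀ i, AnalyticAt ℝ (fun p : ℝ × ℝ => g i (p.1, k p)) (t0, x0) := fun i =>
      AnalyticAt.fun_comp (g := g i) (by simpa only [hk0] using hga i) hφa
    have htend : Filter.Tendsto (fun p : ℝ × ℝ => (p.1, k p)) (nhds (t0, x0))
        (nhds (t0, m0)) := by
      have := hφa.continuousAt.tendsto
      simpa only [hk0] using this
    have e1 : ∀ᶠ p : ℝ × ℝ in nhds (t0, x0), ∀ i, lam i * u' i p.1 (g i (p.1, k p)) = k p :=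
      Filter.eventually_all.2 fun i => htend.eventually (hge i)
    have e2 : ∀ᶠ p : ℝ × ℝ in nhds (t0, x0), ∀ i, 0 < g i (p.1, k p) := by
      refine Filter.eventually_all.2 fun i => (hya i).continuousAt.eventually_const_lt ?_
      simp only [hk0, hg0]
      exact hx_pos i t0 ht0' x0 hx0
    have e : ∀ᶠ p : ℝ × ℝ in nhds (t0, x0),
        k p = musol p.1 p.2 ∧ ∀ i, g i (p.1, k p) = xsol i p.1 p.2 := by
      filter_upwards [e1, e2, hke, (isOpen_Ioo.prod isOpen_Ioi).mem_nhds hp] with p h1 h2 h3 h4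
      exact huniq p.1 (Ioo_subset_Icc_self h4.1) p.2 h4.2 _ _ h2 h3 h1
    exact ⟨fun i => (hya i).congr (e.mono fun p hp => hp.2 i),
      hka.congr (e.mono fun p hp => hp.1)⟩
  exact ⟨fun i p hp => (key p hp).1 i, fun p hp => (key p hp).2⟩
end

section
/- Core lemma for dynamic completeness (deterministic content of Theorem 4): let T > 0, K ≥ 1, and let r : [0,T] × ℝ^K → ℝ^K be continuous and real-analytic on (0,T) × ℝ^K, such that the spatial partial derivatives ∂r_k/∂x_l (k,l = 1,…,K) exist and are continuous on all of [0,T] × ℝ^K (so the spatial Jacobian matrix D_x r extends continuously to t = T). Let σ : ℝ^K → ℝ^{K×K} be real-analytic with σ(x) invertible for every x ∈ ℝ^K. If there exists a point x₀ ∈ ℝ^K with det D_x r(T, x₀) ≠ 0, then the set {(t,x) ∈ (0,T) × ℝ^K : det(D_x r(t,x) · σ(x)) = 0} has (K+1)-dimensional Lebesgue measure zero. -/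
open Set MeasureTheory

/-- The zero set of a not identically vanishing real-analytic function on a convex open set
is a null set: proved by scaling around a point where the function does not vanish. -/
lemma analytic_zero_set_null {E : Type*} [NormedAddCommGroup E] [NormedSpace ℝ E]
    [FiniteDimensional ℝ E] [MeasurableSpace E] [BorelSpace E] (μ : Measure E)
    [μ.IsAddHaarMeasure] (U : Set E) (hU : IsOpen U) (hc : Convex ℝ U) (f : E → ℝ)
    (hf : AnalyticOnNhd ℝ f U) (p : E) (hp : p ∈ U) (hfp : f p ≠ 0) :
    μ {x | x ∈ U ∧ f x = 0} = 0 := by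
  have : ProperSpace E := FiniteDimensional.proper_real E
  set Z : Set E := {x | x ∈ U ∧ f x = 0} with hZ
  have hZm : MeasurableSet Z := by
    have h1 : IsOpen (U ∩ f ⁻¹' {0}ᶜ) :=
      hf.continuousOn.isOpen_inter_preimage hU isOpen_compl_singleton
    have h2 : Z = U \ (U ∩ f ⁻¹' {0}ᶜ) := by
      ext x
      simp only [hZ, mem_ofPred_eq, mem_sdiff, mem_inter_iff, mem_preimage, mem_compl_iff,
        mem_singleton_iff]
      tauto
    rw [h2]
    exact hU.measurableSet.diff h1.measurableSet
  have hcont : Continuous (fun q : E × ℝ => p + q.2 • q.1) := by fun_prop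
  have hSm : MeasurableSet {q : E × ℝ | p + q.2 • q.1 ∉ Z} :=
    (hcont.measurable hZm.compl)
  have hline : ∀ᵐ x ∂μ, ∀ᵐ s : ℝ, p + s • x ∉ Z := by
    refine Filter.Eventually.of_forall fun x => ?_
    let V : Set ℝ := {s | p + s • x ∈ U}
    have hVo : IsOpen V := hU.preimage (by fun_prop : Continuous fun s : ℝ => p + s • x)
    have hVc : Convex ℝ V := by
      intro a ha b hb c d hc0 hd0 hcd
      have := hc ha hb hc0 hd0 hcd
      change p + (c • a + d • b) • x ∈ U
      convert this using 1
      have : p = (c + d) • p := by rw [hcd, one_smul]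
      nth_rewrite 1 [this]
      simp only [smul_eq_mul]
      module
    have hg : AnalyticOnNhd ℝ (fun s : ℝ => f (p + s • x)) V := by
      intro s hs
      have h1 : AnalyticAt ℝ (fun s : ℝ => p + s • x) s := by fun_prop
      exact AnalyticAt.fun_comp (hf _ hs) h1
    have h0 : (0 : ℝ) ∈ V := by simpa [V] using hp
    rcases hg.eqOn_zero_or_eventually_ne_zero_of_preconnected hVc.isPreconnected with h | h
    · have := h h0
      simp at this
      exact absurd this hfp
    · have h3 := ae_restrict_le_codiscreteWithin (μ := (volume : Measure ℝ)) hVo.measurableSet h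
      have h4 : ∀ᵐ s ∂(volume.restrict V), f (p + s • x) ≠ 0 := h3
      rw [ae_restrict_iff' hVo.measurableSet] at h4
      filter_upwards [h4] with s hs hsZ
      exact hs hsZ.1 hsZ.2
  rw [Measure.ae_ae_comm hSm] at hline
  have hne : ∀ᵐ s : ℝ, s ≠ 0 := by simp [ae_iff]
  obtain ⟨s, hs, hs0⟩ := (hline.and hne).exists
  have h5 : μ ((s • ·) ⁻¹' ((p + ·) ⁻¹' Z)) = 0 := by
    have := ae_iff.1 hs
    simp only [not_not] at this
    exact this
  rw [Measure.addHaar_preimage_smul μ hs0, measure_preimage_add] at h5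
  rcases mul_eq_zero.1 h5 with h | h
  · exfalso
    rw [ENNReal.ofReal_eq_zero] at h
    have : 0 < |(s ^ Module.finrank ℝ E)⁻¹| := by positivity
    linarith
  · exact h

/-- Core lemma for dynamic completeness (deterministic content of Theorem 4):
let `r : [0,T] × ℝ^K → ℝ^K` be continuous, real-analytic on `(0,T) × ℝ^K`, with
spatial partial derivatives `∂r_k/∂x_l` existing and continuous on all of
`[0,T] × ℝ^K` (so the spatial Jacobian `Dr` extends continuously to `t = T`), and
let `σ : ℝ^K → ℝ^{K×K}` be real-analytic and pointwise invertible. If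
`det Dr(T, x₀) ≠ 0` for some `x₀`, then the set of `(t,x) ∈ (0,T) × ℝ^K` where
`det (Dr(t,x) · σ(x)) = 0` has `(K+1)`-dimensional Lebesgue measure zero. -/
theorem volatility_matrix_invertible_ae
    (T : ℝ) (hT : 0 < T)
    (K : ℕ) (hK : 1 ≤ K)
    (r : ℝ → (Fin K → ℝ) → (Fin K → ℝ))
    (Dr : ℝ → (Fin K → ℝ) → Matrix (Fin K) (Fin K) ℝ)
    (sigma : (Fin K → ℝ) → Matrix (Fin K) (Fin K) ℝ)
    -- `r` is continuous on `[0,T] × ℝ^K` and real-analytic on `(0,T) × ℝ^K`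
    (hr_cont : ContinuousOn (fun p : ℝ × (Fin K → ℝ) => r p.1 p.2)
      (Icc 0 T ×ˢ (univ : Set (Fin K → ℝ))))
    (hr_anal : AnalyticOnNhd ℝ (fun p : ℝ × (Fin K → ℝ) => r p.1 p.2)
      (Ioo 0 T ×ˢ (univ : Set (Fin K → ℝ))))
    -- `Dr t x k l = ∂r_k/∂x_l (t,x)` exists for all `t ∈ [0,T]`, `x ∈ ℝ^K`
    (hDr : ∀ t ∈ Icc (0:ℝ) T, ∀ (x : Fin K → ℝ) (k l : Fin K),
      HasDerivAt (fun s : ℝ => r t (Function.update x l s) k) (Dr t x k l) (x l))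
    -- and is continuous on all of `[0,T] × ℝ^K`
    (hDr_cont : ∀ k l : Fin K,
      ContinuousOn (fun p : ℝ × (Fin K → ℝ) => Dr p.1 p.2 k l)
        (Icc 0 T ×ˢ (univ : Set (Fin K → ℝ))))
    -- `σ` is real-analytic (entrywise) and everywhere invertible
    (hsigma_anal : ∀ k l : Fin K,
      AnalyticOnNhd ℝ (fun x : Fin K → ℝ => sigma x k l) (univ : Set (Fin K → ℝ)))
    (hsigma_inv : ∀ x : Fin K → ℝ, IsUnit (sigma x))
    -- nondegeneracy of the terminal Jacobian at some point
    (x₀ : Fin K → ℝ) (hx₀ : (Dr T x₀).det ≠ 0) :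
    volume {p : ℝ × (Fin K → ℝ) | p.1 ∈ Ioo 0 T ∧ (Dr p.1 p.2 * sigma p.2).det = 0}
      = 0 := by
  set F : ℝ × (Fin K → ℝ) → (Fin K → ℝ) := fun p => r p.1 p.2 with hF
  set U : Set (ℝ × (Fin K → ℝ)) := Ioo 0 T ×ˢ univ with hUdef
  have hU : IsOpen U := isOpen_Ioo.prod isOpen_univ
  have hUc : Convex ℝ U := (convex_Ioo 0 T).prod convex_univ
  let J : ℝ × (Fin K → ℝ) → Matrix (Fin K) (Fin K) ℝ :=
    fun p => Matrix.of fun k l => fderiv ℝ F p (0, Pi.single l 1) k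
  have hJ : ∀ p ∈ U, J p = Dr p.1 p.2 := by
    rintro ⟨t, x⟩ hp
    ext k l
    have ht : t ∈ Ioo 0 T := hp.1
    have h1 := hDr t (Ioo_subset_Icc_self ht) x k l
    have h2 : HasFDerivAt F (fderiv ℝ F (t, x)) (t, Function.update x l (x l)) := by
      rw [Function.update_eq_self]
      exact (hr_anal _ hp).differentiableAt.hasFDerivAt
    have h3 : HasDerivAt (fun s : ℝ => (t, Function.update x l s)) (0, Pi.single l 1) (x l) :=
      (hasDerivAt_const _ _).prodMk (hasDerivAt_update x l (x l))
    have h4 := h2.comp_hasDerivAt (x l) h3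
    exact ((hasDerivAt_pi.1 h4) k).unique h1
  have hJa : AnalyticOnNhd ℝ (fun p => (J p).det) U := by
    have h1 : ∀ k l, AnalyticOnNhd ℝ (fun p => J p k l) U := by
      intro k l p hp
      have h2 : AnalyticAt ℝ (fderiv ℝ F) p := (hr_anal p hp).fderiv
      let L : ((ℝ × (Fin K → ℝ)) →L[ℝ] (Fin K → ℝ)) →L[ℝ] ℝ :=
        (ContinuousLinearMap.proj k).comp
          (ContinuousLinearMap.apply ℝ (Fin K → ℝ) ((0, Pi.single l 1) : ℝ × (Fin K → ℝ)))
      exact (L.analyticAt _).fun_comp h2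
    simp only [Matrix.det_apply']
    intro p hp
    refine Finset.analyticAt_fun_sum _ fun s _ => ?_
    exact analyticAt_const.mul (Finset.analyticAt_fun_prod _ fun i _ => h1 _ _ p hp)
  obtain ⟨t, ht, hdet⟩ : ∃ t ∈ Ioo 0 T, (Dr t x₀).det ≠ 0 := by
    have hc : ContinuousOn (fun t => (Dr t x₀).det) (Icc 0 T) := by
      simp only [Matrix.det_apply']
      refine continuousOn_finsetSum _ fun s _ => ?_
      refine continuousOn_const.mul (continuousOn_finsetProd _ fun i _ => ?_)
      exact (hDr_cont (s i) i).comp (by fun_prop : ContinuousOn (fun t : ℝ => (t, x₀)) _)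
        (fun t ht => ⟨ht, mem_univ _⟩)
    have h1 := (hc T ⟨hT.le, le_rfl⟩).mono Ioo_subset_Icc_self
    have h2 := h1.eventually_ne hx₀
    have : (nhdsWithin T (Ioo 0 T)).NeBot := right_nhdsWithin_Ioo_neBot hT
    obtain ⟨t, h3, h4⟩ := (h2.and self_mem_nhdsWithin).exists
    exact ⟨t, h4, h3⟩
  have hpU : ((t, x₀) : ℝ × (Fin K → ℝ)) ∈ U := ⟨ht, mem_univ _⟩
  have hvol : (volume : Measure (ℝ × (Fin K → ℝ))).IsAddHaarMeasure := by
    rw [Measure.volume_eq_prod]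
    infer_instance
  have key := analytic_zero_set_null (volume : Measure (ℝ × (Fin K → ℝ))) U hU hUc _ hJa (t, x₀)
    hpU (by rw [hJ _ hpU]; exact hdet)
  refine measure_mono_null ?_ key
  rintro p ⟨hp1, hp2⟩
  have hpU' : p ∈ U := ⟨hp1, mem_univ _⟩
  refine ⟨hpU', ?_⟩
  rw [hJ p hpU']
  rw [Matrix.det_mul] at hp2
  exact (mul_eq_zero.1 hp2).resolve_right
    ((Matrix.isUnit_iff_isUnit_det _).1 (hsigma_inv p.2)).ne_zero
end

section
/- Osgood's theorem on separately holomorphic bounded functions (the result of Osgood (1899) invoked in the proof of Theorem 3): let U ⊆ ℂ^n be open and f : U → ℂ be locally bounded on U and separately holomorphic, i.e., for every point a ∈ U and every coordinate index j, the one-variable function z ↦ f(a_1,…,a_{j-1}, z, a_{j+1},…,a_n) is holomorphic on a neighborhood of a_j. Then f is holomorphic (jointly complex-analytic) on U. -/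
open Set Filter

open Metric MeasureTheory Topology

lemma osg_torusMap_mem {n : ℕ} (c : Fin n → ℂ) {r : ℝ} (hr : 0 ≤ r) (θ : Fin n → ℝ) :
    torusMap c (fun _ => r) θ ∈ closedBall c r := by
  rw [mem_closedBall, dist_pi_le_iff hr]
  intro i
  simp [torusMap, dist_eq_norm, Complex.norm_exp_ofReal_mul_I, abs_of_nonneg hr]

lemma osg_continuous_torusMap {n : ℕ} (c : Fin n → ℂ) (r : ℝ) :
    Continuous (torusMap c (fun _ => r)) := by
  unfold torusMap
  fun_prop

lemma osg_torusMap_ne {n : ℕ} (c : Fin n → ℂ) {r : ℝ} (hr : 0 < r) (θ : Fin n → ℝ)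
    (w : Fin n → ℂ) (hw : w ∈ ball c r) (i : Fin n) :
    torusMap c (fun _ => r) θ i - w i ≠ 0 := by
  intro h
  rw [mem_ball, dist_pi_lt_iff hr] at hw
  have h1 := hw i
  rw [← sub_eq_zero.1 h] at h1
  simp [torusMap, dist_eq_norm, Complex.norm_exp_ofReal_mul_I, abs_of_pos hr] at h1

lemma osg_torusIntegrable {n : ℕ} (c : Fin n → ℂ) {r : ℝ} (hr : 0 < r)
    (f : (Fin n → ℂ) → ℂ) (hf : ContinuousOn f (closedBall c r))
    (w : Fin n → ℂ) (hw : w ∈ ball c r) :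
    TorusIntegrable (fun z => (∏ i, (z i - w i)⁻¹) * f z) c (fun _ => r) := by
  unfold TorusIntegrable
  refine ContinuousOn.integrableOn_compact isCompact_Icc (Continuous.continuousOn ?_)
  have h2 := osg_continuous_torusMap c r
  refine Continuous.mul ?_ (hf.comp_continuous h2 (osg_torusMap_mem c hr.le))
  refine continuous_finsetProd _ fun i _ => ?_
  refine Continuous.inv₀ ?_ (fun θ => osg_torusMap_ne c hr θ w hw i)
  exact ((continuous_apply i).comp h2).sub continuous_const

lemma osg_cauchy {n : ℕ} (c : Fin n → ℂ) {r : ℝ} (hr : 0 < r)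
    (f : (Fin n → ℂ) → ℂ) (hf : ContinuousOn f (closedBall c r))
    (hd : ∀ z ∈ closedBall c r, ∀ j,
      DifferentiableAt ℂ (fun x => f (Function.update z j x)) (z j))
    (w : Fin n → ℂ) (hw : w ∈ ball c r) :
    torusIntegral (fun z => (∏ i, (z i - w i)⁻¹) * f z) c (fun _ => r)
      = (2 * Real.pi * Complex.I) ^ n * f w := by
  induction n with
  | zero =>
    rw [torusIntegral_dim0]
    simp [Subsingleton.elim c w]
  | succ n ih =>
    rw [torusIntegral_succ (osg_torusIntegrable c hr f hf w hw)]
    have hw' := hw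
    rw [mem_ball, dist_pi_lt_iff hr, Fin.forall_fin_succ] at hw'
    have hmem : ∀ x ∈ closedBall (c 0) r, ∀ y ∈ closedBall (c ∘ Fin.succ) r,
        (Fin.cons x y : Fin (n+1) → ℂ) ∈ closedBall c r := by
      intro x hx y hy
      rw [mem_closedBall, dist_pi_le_iff hr.le] at hy ⊢
      rw [Fin.forall_fin_succ]
      exact ⟨by simpa using hx, fun i => by simpa using hy i⟩
    have hwt : (fun i : Fin n => w i.succ) ∈ ball (c ∘ Fin.succ) r := by
      rw [mem_ball, dist_pi_lt_iff hr]
      exact hw'.2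
    have key : ∀ x ∈ closedBall (c 0) r,
        torusIntegral (fun y : Fin n → ℂ => (∏ i, ((Fin.cons x y : Fin (n+1) → ℂ) i - w i)⁻¹)
          * f (Fin.cons x y)) (c ∘ Fin.succ) (fun _ => r)
        = (x - w 0)⁻¹ • ((2 * Real.pi * Complex.I) ^ n * f (Fin.cons x (fun i => w i.succ))) := by
      intro x hx
      rw [← ih (c ∘ Fin.succ) (fun y => f (Fin.cons x y)) ?_ ?_ _ hwt, smul_eq_mul,
        ← torusIntegral_const_mul]
      · congr 1
        ext y
        simp only [Fin.prod_univ_succ, Fin.cons_zero, Fin.cons_succ]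
        ring
      · refine hf.comp (Continuous.continuousOn ?_) (fun y hy => hmem x hx y hy)
        fun_prop
      · intro z hz j
        have := hd _ (hmem x hx z hz) j.succ
        simpa [Fin.cons_update] using this
    have hcomp : ((fun _ : Fin (n+1) => r) ∘ Fin.succ) = fun _ : Fin n => r := rfl
    rw [hcomp]
    rw [circleIntegral.integral_congr hr.le
      (fun x hx => key x (sphere_subset_closedBall hx))]
    have hdiff : DifferentiableOn ℂ (fun x => (2 * Real.pi * Complex.I) ^ n *
        f (Fin.cons x (fun i => w i.succ))) (closedBall (c 0) r) := by
      intro x hx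
      have := hd _ (hmem x hx _ (ball_subset_closedBall hwt)) 0
      simp only [Fin.update_cons_zero, Fin.cons_zero] at this
      exact (this.const_mul _).differentiableWithinAt
    rw [hdiff.circleIntegral_sub_inv_smul (by simpa using hw'.1)]
    have : (Fin.cons (w 0) (fun i : Fin n => w i.succ) : Fin (n+1) → ℂ) = w :=
      Fin.cons_self_tail w
    rw [this, smul_eq_mul, pow_succ]
    ring

lemma osg_continuousAt {n : ℕ} (a : Fin n → ℂ) {r C : ℝ} (hr : 0 < r)
    (f : (Fin n → ℂ) → ℂ) (hC : ∀ z ∈ ball a r, ‖f z‖ ≤ C)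
    (hd : ∀ z ∈ ball a r, ∀ j,
      DifferentiableAt ℂ (fun x => f (Function.update z j x)) (z j)) :
    ContinuousAt f a := by
  have key : ∀ w ∈ ball a r, ∀ s : Finset (Fin n),
      dist (f (s.piecewise w a)) (f a) ≤ s.card * ((2 * C) / r * dist w a) := by
    intro w hw s
    have hw' := hw
    rw [mem_ball, dist_pi_lt_iff hr] at hw'
    induction s using Finset.induction_on with
    | empty => simp
    | insert j s hj ih =>
      set p := s.piecewise w a with hp
      have hpj : p j = a j := by simp [hp, hj]
      have hup : ∀ x ∈ ball (a j) r, Function.update p j x ∈ ball a r := by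
        intro x hx
        rw [mem_ball, dist_pi_lt_iff hr]
        intro i
        by_cases hi : i = j
        · subst hi; simpa using hx
        · rw [Function.update_of_ne hi]
          by_cases his : i ∈ s
          · simpa [hp, his] using hw' i
          · simpa [hp, his] using hr
      have hself : Function.update p j (a j) = p := by rw [← hpj]; simp
      have hS := Complex.dist_le_div_mul_dist_of_mapsTo_ball
        (f := fun x => f (Function.update p j x)) (c := a j) (R₁ := r) (R₂ := 2 * C)
        (z := w j) ?_ ?_ (hw' j)
      · rw [hself] at hS
        rw [Finset.piecewise_insert, Finset.card_insert_of_notMem hj]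
        have hC0 : 0 ≤ C := (norm_nonneg _).trans (hC a (mem_ball_self hr))
        have h3 : 2 * C / r * dist (w j) (a j) ≤ 2 * C / r * dist w a := by
          gcongr
          exact dist_le_pi_dist w a j
        have := dist_triangle (f (Function.update p j (w j))) (f p) (f a)
        push_cast
        linarith
      · intro x hx
        have := hd _ (hup x hx) j
        simp only [Function.update_idem, Function.update_self] at this
        exact this.differentiableWithinAt
      · intro x hx
        rw [mem_closedBall, dist_eq_norm]
        refine (norm_sub_le _ _).trans ?_
        have h1 := hC _ (hup x hx)
        have h2 := hC _ (hup (a j) (mem_ball_self hr))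
        linarith
  rw [ContinuousAt, tendsto_iff_dist_tendsto_zero]
  have hlim : Tendsto (fun w : Fin n → ℂ => (n : ℝ) * ((2 * C) / r * dist w a)) (𝓝 a) (𝓝 0) := by
    have : Continuous (fun w : Fin n → ℂ => (n : ℝ) * ((2 * C) / r * dist w a)) := by fun_prop
    simpa using this.tendsto a
  refine squeeze_zero' (Eventually.of_forall fun _ => dist_nonneg) ?_ hlim
  filter_upwards [ball_mem_nhds a hr] with w hw
  simpa using key w hw Finset.univ

open scoped BoundedContinuousFunction in
lemma osg_analyticAt {n : ℕ} (c : Fin n → ℂ) {r : ℝ} (hr : 0 < r)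
    (f : (Fin n → ℂ) → ℂ) (hf : ContinuousOn f (closedBall c r))
    (hd : ∀ z ∈ closedBall c r, ∀ j,
      DifferentiableAt ℂ (fun x => f (Function.update z j x)) (z j)) :
    AnalyticAt ℂ f c := by
  -- the weight
  let h : (Fin n → ℝ) → ℂ := fun θ =>
    (∏ i : Fin n, (r : ℂ) * Complex.exp (θ i * Complex.I) * Complex.I) *
      f (torusMap c (fun _ => r) θ)
  let S : Set (Fin n → ℝ) := Set.Icc 0 (fun _ => 2 * Real.pi)
  have hh : Continuous h := by
    refine Continuous.mul (by fun_prop)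
      (hf.comp_continuous (osg_continuous_torusMap c r) (osg_torusMap_mem c hr.le))
  have hint : ∀ g : (Fin n → ℝ) →ᵇ ℂ, IntegrableOn (fun θ => h θ * g θ) S := fun g =>
    (hh.mul g.continuous).continuousOn.integrableOn_compact isCompact_Icc
  have hhint : IntegrableOn (fun θ => ‖h θ‖) S :=
    hh.norm.continuousOn.integrableOn_compact isCompact_Icc
  let L0 : ((Fin n → ℝ) →ᵇ ℂ) →ₗ[ℂ] ℂ :=
    { toFun := fun g => ∫ θ in S, h θ * g θ
      map_add' := fun g g' => by
        simp only [BoundedContinuousFunction.add_apply, mul_add]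
        exact integral_add (hint g) (hint g')
      map_smul' := fun a g => by
        simp only [BoundedContinuousFunction.smul_apply, smul_eq_mul, RingHom.id_apply]
        rw [← integral_const_mul]
        congr 1
        ext θ
        ring }
  let L : ((Fin n → ℝ) →ᵇ ℂ) →L[ℂ] ℂ := L0.mkContinuous (∫ θ in S, ‖h θ‖) (by
    intro g
    change ‖∫ θ in S, h θ * g θ‖ ≤ _
    rw [← integral_mul_const]
    refine norm_integral_le_of_norm_le (hhint.mul_const _) (Eventually.of_forall fun θ => ?_)
    rw [norm_mul]
    gcongr
    exact g.norm_coe_le_norm θ)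
  have hL : ∀ g, L g = ∫ θ in S, h θ * g θ := fun g => rfl
  let u : Fin n → ((Fin n → ℝ) →ᵇ ℂ) := fun i =>
    BoundedContinuousFunction.ofNormedAddCommGroup
      (fun θ => (r : ℂ) * Complex.exp (θ i * Complex.I)) (by fun_prop) r
      (fun θ => by simp [Complex.norm_exp_ofReal_mul_I, abs_of_pos hr])
  let v : Fin n → ((Fin n → ℝ) →ᵇ ℂ) := fun i =>
    BoundedContinuousFunction.ofNormedAddCommGroup
      (fun θ => (r : ℂ)⁻¹ * Complex.exp (-(θ i * Complex.I))) (by fun_prop) r⁻¹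
      (fun θ => by
        have : -((θ i : ℂ) * Complex.I) = ((-θ i : ℝ) : ℂ) * Complex.I := by push_cast; ring
        rw [this, norm_mul, Complex.norm_exp_ofReal_mul_I]
        simp [abs_of_pos hr])
  have huv : ∀ i, u i * v i = 1 := by
    intro i
    ext θ
    have : (r : ℂ) ≠ 0 := by exact_mod_cast hr.ne'
    change ((r : ℂ) * Complex.exp (θ i * Complex.I)) *
      ((r : ℂ)⁻¹ * Complex.exp (-(θ i * Complex.I))) = 1
    rw [Complex.exp_neg]
    have := Complex.exp_ne_zero (θ i * Complex.I)
    field_simp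
  let k : Fin n → (Fin n → ℂ) → ((Fin n → ℝ) →ᵇ ℂ) := fun i z =>
    u i - (z i - c i) • (1 : (Fin n → ℝ) →ᵇ ℂ)
  have hkval : ∀ i z θ, k i z θ = torusMap c (fun _ => r) θ i - z i := by
    intro i z θ
    change (r : ℂ) * Complex.exp (θ i * Complex.I) - (z i - c i) * 1 = _
    simp only [torusMap]
    ring
  have hkc : ∀ i, k i c = u i := by intro i; simp [k]
  have hkan : ∀ i, AnalyticAt ℂ (k i) c := by
    intro i
    have h1 : AnalyticAt ℂ (fun z : Fin n → ℂ => z i) c :=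
      (ContinuousLinearMap.proj (R := ℂ) (φ := fun _ : Fin n => ℂ) i).analyticAt c
    exact analyticAt_const.sub ((h1.sub analyticAt_const).smul analyticAt_const)
  have hunit : ∀ i, IsUnit (k i c) := fun i => by
    rw [hkc]; exact IsUnit.of_mul_eq_one _ (huv i)
  have hG : AnalyticAt ℂ (fun z => ∏ i, Ring.inverse (k i z)) c := by
    refine Finset.analyticAt_fun_prod _ fun i _ => ?_
    have h2 : AnalyticAt ℂ Ring.inverse (k i c) := by
      simpa using analyticAt_inverse (𝕜 := ℂ) (hunit i).unit
    exact h2.comp (hkan i)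
  have hLG : AnalyticAt ℂ (fun z => ((2 * Real.pi * Complex.I) ^ n)⁻¹ *
      L (∏ i, Ring.inverse (k i z))) c :=
    analyticAt_const.mul ((L.analyticAt _).comp hG)
  refine hLG.congr ?_
  have hev : ∀ᶠ z in 𝓝 c, ∀ i, IsUnit (k i z) := by
    rw [eventually_all]
    intro i
    exact (hkan i).continuousAt.eventually (Units.isOpen.mem_nhds (hunit i))
  filter_upwards [hev, ball_mem_nhds c hr] with z hz hzb
  have hC := osg_cauchy c hr f hf hd z hzb
  have : L (∏ i, Ring.inverse (k i z)) = (2 * Real.pi * Complex.I) ^ n * f z := by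
    rw [← hC, hL, torusIntegral]
    congr 1
    ext θ
    have hinv : ∀ i, (Ring.inverse (k i z)) θ = (torusMap c (fun _ => r) θ i - z i)⁻¹ := by
      intro i
      have := congrArg (fun g : (Fin n → ℝ) →ᵇ ℂ => g θ) (Ring.inverse_mul_cancel _ (hz i))
      simp only [BoundedContinuousFunction.mul_apply, hkval] at this
      exact eq_inv_of_mul_eq_one_left this
    have hprod : (∏ i, Ring.inverse (k i z)) θ
        = ∏ i, (torusMap c (fun _ => r) θ i - z i)⁻¹ := by
      simp [BoundedContinuousFunction.coe_prod, hinv]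
    rw [hprod]
    simp only [h, smul_eq_mul]
    ring
  rw [this, inv_mul_cancel_left₀]
  exact pow_ne_zero _ Complex.two_pi_I_ne_zero

/-- Osgood's theorem on separately holomorphic bounded functions (Osgood 1899):
if `U ⊆ ℂ^n` is open and `f : U → ℂ` is locally bounded on `U` and separately
holomorphic — i.e., for every `a ∈ U` and every coordinate `j`, the one-variable
function `z ↦ f(a₁,…,a_{j-1}, z, a_{j+1},…,a_n)` is holomorphic on a neighborhood
of `a j` — then `f` is holomorphic (jointly complex-analytic) on `U`. -/
theorem osgood_separately_holomorphic_locally_bounded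
    (n : ℕ) (U : Set (Fin n → ℂ)) (hU : IsOpen U)
    (f : (Fin n → ℂ) → ℂ)
    -- `f` is locally bounded on `U`
    (hbdd : ∀ a ∈ U, ∃ V ∈ nhds a, ∃ C : ℝ, ∀ z ∈ V, ‖f z‖ ≤ C)
    -- `f` is separately holomorphic
    (hsep : ∀ a ∈ U, ∀ j : Fin n,
      ∀ᶠ z in nhds (a j), DifferentiableAt ℂ (fun w : ℂ => f (Function.update a j w)) z) :
    AnalyticOnNhd ℂ f U := by
  intro a ha
  have hd : ∀ z ∈ U, ∀ j,
      DifferentiableAt ℂ (fun x => f (Function.update z j x)) (z j) :=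
    fun z hz j => (hsep z hz j).self_of_nhds
  have hcont : ∀ z ∈ U, ContinuousAt f z := by
    intro z hz
    obtain ⟨V, hV, C, hC⟩ := hbdd z hz
    obtain ⟨r, hr, hball⟩ := Metric.mem_nhds_iff.1 (inter_mem hV (hU.mem_nhds hz))
    exact osg_continuousAt z hr f (fun w hw => hC w (hball hw).1)
      (fun w hw => hd w (hball hw).2)
  obtain ⟨r, hr, hball⟩ := Metric.nhds_basis_closedBall.mem_iff.1 (hU.mem_nhds ha)
  exact osg_analyticAt a hr f (fun z hz => (hcont z (hball hz)).continuousWithinAt)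
    (fun z hz => hd z (hball hz))
end
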